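/- arXiv:2009.03837 — 6 statements merged into one kernel-verified Lean document; each statement's English description precedes it below -/
import Mathlib

section
/- Let A be a ring and Q a projective left A-module. Suppose that Hom_A(Q, -) commutes with arbitrary direct sums, i.e., for every family (M_j)_{j ∈ J} of left A-modules the canonical map ⊕_{j ∈ J} Hom_A(Q, M_j) → Hom_A(Q, ⊕_{j ∈ J} M_j) is bijective. Then Q is finitely generated. -/
open DirectSum

universe u

/-!
A linear section `s` of the surjection from the free module on a generating family `v` expresses
each `q : Q` as a combination of the `v i`, with coefficients supported on a finite set that may
depend on `q`. If `s` comes from a finitely supported family of functionals `f i : Q → A`, then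
one finite set of indices serves all `q` simultaneously, and the corresponding `v i` generate `Q`.
-/

section Comparison

variable {A Q J : Type*} [Semiring A] [AddCommMonoid Q] [Module A Q] [DecidableEq J]
  {M : J → Type*} [∀ j, AddCommMonoid (M j)] [∀ j, Module A (M j)]

variable (A Q M) in
/-- The canonical map `⨁ j, Hom(Q, M j) → Hom(Q, ⨁ j, M j)`, which compares the functor `Hom(Q, -)`
with direct sums. It is only additive, since `Hom(Q, -)` carries no `A`-action when `A` is not
commutative. -/
def directSumHomComparison : (⨁ j, Q →ₗ[A] M j) →+ (Q →ₗ[A] ⨁ j, M j) :=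
  DirectSum.toAddMonoid fun j => ((DirectSum.lof A J M j).compRight ℕ).toAddMonoidHom

theorem directSumHomComparison_of (j : J) (g : Q →ₗ[A] M j) :
    directSumHomComparison A Q M (DirectSum.of (fun j => Q →ₗ[A] M j) j g) =
      DirectSum.lof A J M j ∘ₗ g :=
  DirectSum.toAddMonoid_of _ _ _

theorem directSumHomComparison_apply_apply (f : ⨁ j, Q →ₗ[A] M j) (q : Q) (j : J) :
    directSumHomComparison A Q M f q j = f j q := by
  induction f using DirectSum.induction_on with
  | zero => simp
  | of i g =>
    rw [directSumHomComparison_of, LinearMap.comp_apply]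
    obtain rfl | hij := eq_or_ne i j
    · rw [DirectSum.lof_apply, DirectSum.of_eq_same]
    · rw [DirectSum.lof_eq_of, DirectSum.of_eq_of_ne _ _ _ hij.symm,
        DirectSum.of_eq_of_ne _ _ _ hij.symm, LinearMap.zero_apply]
  | add f g hf hg =>
    simp only [map_add, LinearMap.add_apply, DirectSum.add_apply, hf, hg]

theorem exists_finset_forall_notMem_directSumHomComparison_eq_zero (f : ⨁ j, Q →ₗ[A] M j) :
    ∃ S : Finset J, ∀ q, ∀ j ∉ S, directSumHomComparison A Q M f q j = 0 := by
  classical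
  refine ⟨DFinsupp.support f, fun q j hj => ?_⟩
  rw [directSumHomComparison_apply_apply, DFinsupp.notMem_support_iff.mp hj, LinearMap.zero_apply]

end Comparison

section Generation

variable {A Q ι : Type*} [Semiring A] [AddCommMonoid Q] [Module A Q] {v : ι → Q}

theorem span_image_eq_top_of_rightInverse_linearCombination {s : Q → ι →₀ A} {S : Set ι}
    (hs : Function.RightInverse s (Finsupp.linearCombination A v))
    (hS : ∀ q, s q ∈ Finsupp.supported A A S) :
    Submodule.span A (v '' S) = ⊤ :=
  Submodule.eq_top_iff'.mpr fun q =>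
    (Finsupp.mem_span_image_iff_linearCombination A).mpr ⟨s q, hS q, hs q⟩

theorem projective_finite_of_hom_commutes_with_directSum_general [DecidableEq ι]
    (hproj : Module.Projective A Q) (hv : Submodule.span A (Set.range v) = ⊤)
    (hsurj : Function.Surjective (directSumHomComparison A Q fun _ : ι => A)) :
    Module.Finite A Q := by
  obtain ⟨s, hs⟩ : ∃ s, Finsupp.linearCombination A v ∘ₗ s = LinearMap.id :=
    LinearMap.exists_rightInverse_of_surjective _ <| by rw [Finsupp.range_linearCombination, hv]
  obtain ⟨f, hf⟩ := hsurj ((finsuppLEquivDirectSum A A ι).toLinearMap ∘ₗ s)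
  obtain ⟨S, hS⟩ := exists_finset_forall_notMem_directSumHomComparison_eq_zero f
  have s_supported (q : Q) : s q ∈ Finsupp.supported A A (S : Set ι) := by
    refine (Finsupp.mem_supported' A (s q)).mpr fun i hi => ?_
    have hzero := hS q i hi
    rwa [hf, LinearMap.comp_apply, LinearEquiv.coe_coe, finsuppLEquivDirectSum_apply] at hzero
  have hspan : Submodule.span A (v '' S) = ⊤ :=
    span_image_eq_top_of_rightInverse_linearCombination (LinearMap.congr_fun hs) s_supported
  exact Module.Finite.of_fg_top <| hspan ▸ Submodule.fg_span (S.finite_toSet.image v)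

end Generation

/-- If `Q` is a projective left `A`-module such that `Hom_A(Q, -)` commutes with arbitrary
direct sums (i.e. for every family `(M j)` of left `A`-modules, the canonical map
`⊕_j Hom_A(Q, M j) → Hom_A(Q, ⊕_j M j)`, sending a finitely supported family `(f_j)` to
`q ↦ (f_j q)_j`, is bijective), then `Q` is finitely generated. -/
theorem projective_finite_of_hom_commutes_with_directSum
    {A : Type u} [Ring A] {Q : Type u} [AddCommGroup Q] [Module A Q]
    (hproj : Module.Projective A Q)
    (hcomm : ∀ (J : Type u) [DecidableEq J] (M : J → Type u)
      [∀ j, AddCommGroup (M j)] [∀ j, Module A (M j)],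
      Function.Bijective
        (DFinsupp.sumAddHom (β := fun j => Q →ₗ[A] M j)
          (γ := Q →ₗ[A] ⨁ j, M j)
          (fun j => AddMonoidHom.mk'
            (fun g => (DirectSum.lof A J M j) ∘ₗ g)
            (fun g₁ g₂ => by ext q; simp)))) :
    Module.Finite A Q := by
  classical
  exact projective_finite_of_hom_commutes_with_directSum_general (v := id) hproj (by simp)
    (hcomm Q fun _ => A).surjective
end

section
/- Let C be an abelian category, let I be an h-injective cochain complex in C, and let s : X → Y be a quasi-isomorphism of cochain complexes in C. Then precomposition with s induces a bijection from the set of homotopy classes of cochain maps Y → I to the set of homotopy classes of cochain maps X → I. -/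
open CategoryTheory Limits

universe v u

/-- A cochain complex `I` is h-injective if every cochain map from an acyclic complex
to `I` is homotopic to zero. -/
def CochainComplex.IsHInjective {C : Type u} [Category.{v} C] [Abelian C]
    (I : CochainComplex C ℤ) : Prop :=
  ∀ (X : CochainComplex C ℤ), (∀ n : ℤ, IsZero (X.homology n)) →
    ∀ f : X ⟶ I, Nonempty (Homotopy f 0)

namespace CochainComplex

variable {C : Type u} [Category.{v} C] [Abelian C]

lemma isHInjective_iff_isKInjective (I : CochainComplex C ℤ) :
    I.IsHInjective ↔ I.IsKInjective where
  mp hI := ⟨fun {K} f hK => hI K (fun n => (hK n).isZero_homology) f⟩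
  mpr hI K hK f := hI.nonempty_homotopy_zero f fun n => (K.exactAt_iff_isZero_homology n).mpr (hK n)

-- A map is a quasi-isomorphism exactly when its cone is acyclic, so by the long exact sequence of
-- `Hom(-, I)`, this functor inverts quasi-isomorphisms if and only if it kills acyclic complexes.
lemma isKInjective_iff_isLocal_quasiIso (I : CochainComplex C ℤ) :
    I.IsKInjective ↔
      (HomotopyCategory.quasiIso C (ComplexShape.up ℤ)).isLocal
        ((HomotopyCategory.quotient C (ComplexShape.up ℤ)).obj I) := by
  rw [HomotopyCategory.quasiIso_eq_trW_subcategoryAcyclic, ObjectProperty.isLocal_trW,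
    isKInjective_iff_rightOrthogonal]

end CochainComplex

/-- If `I` is h-injective and `s : X ⟶ Y` is a quasi-isomorphism, then precomposition
with `s` induces a bijection on homotopy classes of maps into `I`. -/
theorem CochainComplex.bijective_precomp_of_quasiIso_of_isHInjective
    {C : Type u} [Category.{v} C] [Abelian C] {I X Y : CochainComplex C ℤ}
    (hI : I.IsHInjective) (s : X ⟶ Y) [QuasiIso s] :
    Function.Bijective (fun g :
        ((HomotopyCategory.quotient C (ComplexShape.up ℤ)).obj Y ⟶
          (HomotopyCategory.quotient C (ComplexShape.up ℤ)).obj I) =>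
      (HomotopyCategory.quotient C (ComplexShape.up ℤ)).map s ≫ g) := by
  have hI_local := I.isKInjective_iff_isLocal_quasiIso.mp (I.isHInjective_iff_isKInjective.mp hI)
  have hs : HomotopyCategory.quasiIso C (ComplexShape.up ℤ)
      ((HomotopyCategory.quotient C (ComplexShape.up ℤ)).map s) :=
    (HomotopyCategory.quotient_map_mem_quasiIso_iff s).mpr ‹QuasiIso s›
  exact hI_local _ hs
end

section
/- Let S and T be pretriangulated categories admitting arbitrary small coproducts, let F₁, F₂ : S → T be triangulated (exact) functors commuting with the shift and preserving arbitrary small coproducts, and let τ : F₁ → F₂ be a natural transformation compatible with the shift isomorphisms. Let C be an object of S that generates S in the following sense: every strictly full triangulated subcategory of S that is closed under arbitrary small coproducts and contains C is equal to S. If τ_C is an isomorphism, then τ_Y is an isomorphism for every object Y of S. -/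
open CategoryTheory Limits Pretriangulated

universe w v₁ v₂ u₁ u₂

/-! The objects at which `τ` is invertible form a localizing subcategory. Shift compatibility
handles shifts and makes `τ` a morphism between the images of any distinguished triangle, so that
the five lemma for triangles handles extensions. Preservation of coproducts handles coproducts:
on a coproduct, `τ` is the coproduct of its values on the summands. -/

section NatTrans

variable {S : Type u₁} {T : Type u₂} [Category.{v₁} S] [Category.{v₂} T] {F₁ F₂ : S ⥤ T}

lemma map_comp_commShiftIso_comp_shift_app (τ : F₁ ⟶ F₂) {A : Type*} [AddMonoid A]
    [HasShift S A] [HasShift T A] [F₁.CommShift A] [F₂.CommShift A] [NatTrans.CommShift τ A]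
    {a : A} {X Y : S} (f : X ⟶ Y⟦a⟧) :
    (F₁.map f ≫ (F₁.commShiftIso a).hom.app Y) ≫ (τ.app Y)⟦a⟧' =
      τ.app X ≫ F₂.map f ≫ (F₂.commShiftIso a).hom.app Y := by
  rw [Category.assoc, NatTrans.shift_app_comm, NatTrans.naturality_assoc]

/-- The full subcategory of objects at which a natural transformation `τ` is an isomorphism,
encoded as a property of objects. -/
def isoLocus (τ : F₁ ⟶ F₂) : ObjectProperty S :=
  fun X ↦ IsIso (τ.app X)

namespace isoLocus

variable (τ : F₁ ⟶ F₂)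

instance isClosedUnderIsomorphisms : (isoLocus τ).IsClosedUnderIsomorphisms where
  of_iso e hX := (NatTrans.isIso_app_iff_of_iso τ e).1 hX

instance isClosedUnderColimitsOfShape (J : Type*) [Category* J]
    [PreservesColimitsOfShape J F₁] [PreservesColimitsOfShape J F₂] :
    (isoLocus τ).IsClosedUnderColimitsOfShape J where
  colimitsOfShape_le := by
    rintro X ⟨p⟩
    have (j : J) : IsIso ((p.diag.whiskerLeft τ).app j) := p.prop_diag_obj j
    have : IsIso (p.diag.whiskerLeft τ) := NatIso.isIso_of_isIso_app _
    let α : p.diag ⋙ F₁ ≅ p.diag ⋙ F₂ := asIso (p.diag.whiskerLeft τ)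
    let h₁ := isColimitOfPreserves F₁ p.isColimit
    let h₂ := isColimitOfPreserves F₂ p.isColimit
    have he : τ.app X = (h₁.coconePointsIsoOfNatIso h₂ α).hom := h₁.hom_ext fun j ↦
      (τ.naturality (p.ι.app j)).trans (h₁.comp_coconePointsIsoOfNatIso_hom h₂ α j).symm
    change IsIso (τ.app X)
    rw [he]
    infer_instance

instance containsZero [HasZeroObject S] [HasZeroMorphisms S] [HasZeroMorphisms T]
    [F₁.PreservesZeroMorphisms] [F₂.PreservesZeroMorphisms] :
    (isoLocus τ).ContainsZero where
  exists_zero :=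
    have ⟨Z, hZ⟩ := HasZeroObject.zero (C := S)
    ⟨Z, hZ, (F₁.map_isZero hZ).isIso (F₂.map_isZero hZ) _⟩

instance isStableUnderShift (A : Type*) [AddMonoid A] [HasShift S A] [HasShift T A]
    [F₁.CommShift A] [F₂.CommShift A] [NatTrans.CommShift τ A] :
    (isoLocus τ).IsStableUnderShift A where
  isStableUnderShiftBy a :=
    { le_shift X (hX : IsIso (τ.app X)) := by
        change IsIso (τ.app (X⟦a⟧))
        rw [NatTrans.app_shift τ a X]
        infer_instance }

end isoLocus

end NatTrans

section Triangulated

variable {S : Type u₁} {T : Type u₂} [Category.{v₁} S] [Category.{v₂} T]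
  [Preadditive S] [Preadditive T] [HasShift S ℤ] [HasShift T ℤ]
  {F₁ F₂ : S ⥤ T} [F₁.CommShift ℤ] [F₂.CommShift ℤ]

/-- The natural transformation between the induced functors on triangles, given componentwise
by a natural transformation `τ` compatible with the shifts. -/
def mapTriangleNatTrans (τ : F₁ ⟶ F₂) [NatTrans.CommShift τ ℤ] :
    F₁.mapTriangle ⟶ F₂.mapTriangle where
  app X :=
    { hom₁ := τ.app X.obj₁
      hom₂ := τ.app X.obj₂
      hom₃ := τ.app X.obj₃
      comm₁ := τ.naturality X.mor₁
      comm₂ := τ.naturality X.mor₂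
      comm₃ := map_comp_commShiftIso_comp_shift_app τ X.mor₃ }
  naturality X Y f := by
    ext
    · exact τ.naturality f.hom₁
    · exact τ.naturality f.hom₂
    · exact τ.naturality f.hom₃

variable [HasZeroObject S] [HasZeroObject T]
  [∀ n : ℤ, (shiftFunctor S n).Additive] [∀ n : ℤ, (shiftFunctor T n).Additive]
  [Pretriangulated S] [Pretriangulated T]

instance isoLocus.isTriangulated [F₁.IsTriangulated] [F₂.IsTriangulated]
    (τ : F₁ ⟶ F₂) [NatTrans.CommShift τ ℤ] : (isoLocus τ).IsTriangulated where
  toIsTriangulatedClosed₂ := .mk' fun X hX h₁ h₃ ↦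
    isIso₂_of_isIso₁₃ ((mapTriangleNatTrans τ).app X)
      (F₁.map_distinguished X hX) (F₂.map_distinguished X hX) h₁ h₃

/-- A family `G` of objects generates `S` as a localizing subcategory: the only strictly full
triangulated subcategory containing `G` and closed under `w`-small coproducts is `S` itself.
Closure is required only for those coproducts that exist in `S`. -/
def IsLocalizingGenerator (G : ObjectProperty S) : Prop :=
  ∀ (P : ObjectProperty S) [P.IsClosedUnderIsomorphisms] [P.IsTriangulated]
    [∀ J : Type w, P.IsClosedUnderColimitsOfShape (Discrete J)], G ≤ P → P = ⊤

theorem natTrans_isIso_of_isIso_on_generator_general [F₁.IsTriangulated] [F₂.IsTriangulated]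
    [∀ J : Type w, PreservesColimitsOfShape (Discrete J) F₁]
    [∀ J : Type w, PreservesColimitsOfShape (Discrete J) F₂]
    (τ : F₁ ⟶ F₂) [NatTrans.CommShift τ ℤ] {G : ObjectProperty S}
    (hG : IsLocalizingGenerator.{w} G) (hτ : G ≤ isoLocus τ) (Y : S) :
    IsIso (τ.app Y) :=
  (hG (isoLocus τ) hτ).ge Y trivial

end Triangulated

/-- Let `F₁, F₂` be triangulated functors between pretriangulated categories with small
coproducts, both preserving small coproducts, and let `τ : F₁ ⟶ F₂` be a natural
transformation compatible with the shifts. If `C` is a compact-type generator of `S`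
(in the sense that every strictly full triangulated subcategory closed under small
coproducts and containing `C` is all of `S`) and `τ` is an isomorphism at `C`, then
`τ` is an isomorphism everywhere. -/
theorem natTrans_isIso_of_isIso_on_generator
    {S : Type u₁} {T : Type u₂} [Category.{v₁} S] [Category.{v₂} T]
    [HasZeroObject S] [HasZeroObject T] [Preadditive S] [Preadditive T]
    [HasShift S ℤ] [HasShift T ℤ]
    [∀ n : ℤ, (shiftFunctor S n).Additive] [∀ n : ℤ, (shiftFunctor T n).Additive]
    [Pretriangulated S] [Pretriangulated T]
    [HasCoproducts.{w} S] [HasCoproducts.{w} T]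
    (F₁ F₂ : S ⥤ T) [F₁.CommShift ℤ] [F₂.CommShift ℤ]
    [F₁.IsTriangulated] [F₂.IsTriangulated]
    [∀ J : Type w, PreservesColimitsOfShape (Discrete J) F₁]
    [∀ J : Type w, PreservesColimitsOfShape (Discrete J) F₂]
    (τ : F₁ ⟶ F₂) [NatTrans.CommShift τ ℤ]
    (C : S)
    (hgen : ∀ P : S → Prop,
      (∀ {X Y : S}, (X ≅ Y) → P X → P Y) →
      (∀ X : S, IsZero X → P X) →
      (∀ X : S, P X → P (X⟦(1 : ℤ)⟧)) →
      (∀ X : S, P X → P (X⟦(-1 : ℤ)⟧)) →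
      (∀ Tr ∈ distTriang S, P Tr.obj₁ → P Tr.obj₂ → P Tr.obj₃) →
      (∀ {J : Type w} (X : J → S), (∀ j, P (X j)) → P (∐ X)) →
      P C → ∀ X : S, P X)
    (hτC : IsIso (τ.app C)) :
    ∀ Y : S, IsIso (τ.app Y) := by
  have hG : IsLocalizingGenerator.{w} (.singleton C) := fun P _ _ _ hC ↦
    eq_top_iff.2 fun X _ ↦ hgen P P.prop_of_iso (fun _ ↦ P.prop_of_isZero)
      (P.le_shift 1) (P.le_shift (-1)) P.ext_of_isTriangulatedClosed₃
      (fun _ hX ↦ P.prop_colimit _ fun j ↦ hX j.as) (ObjectProperty.singleton_le_iff.1 hC) X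
  exact natTrans_isIso_of_isIso_on_generator_general τ hG (ObjectProperty.singleton_le_iff.2 hτC)
end

section
/- Let C be a Grothendieck abelian category. Then the unbounded derived category D(C) admits arbitrary small products. -/
open CategoryTheory Limits

universe w v u

/-!
Products of K-injective complexes are computed termwise and are products in the derived category
(`Q` identifies morphisms to a K-injective complex with homotopy classes), so it suffices to show
that every complex is quasi-isomorphic to a K-injective one.

Call a monomorphism which is a quasi-isomorphism an acyclic monomorphism. A complex `I` is
K-injective as soon as every acyclic monomorphism `I ⟶ B` splits: apply this to the inclusion of
`I` in the mapping cone of `K ⟶ I` with `K` acyclic. By Zorn's lemma and the exactness of filtered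
colimits, it splits if every acyclic monomorphism `q : I ⟶ B` which is not an isomorphism remains
one after passing to some proper quotient of `B`.

Such quotients exist if there is a single complex `H` with the property that, for all such `q`,
some `f : H ⟶ B` does not factor through `q` and pulls `q` back to an acyclic monomorphism
`R ⟶ H`: when `I` has the extension property for the acyclic subobjects of `H`, the map `R ⟶ I`
extends to `H`, which gives a retraction to `I` of the union `P` of `I` and the image of `H` in
`B`; now push `B` out along `P ⟶ I`. As `H` has a small set of subobjects, the small object
argument maps every complex quasi-isomorphically to such an `I`.

To construct `H`, start with a separator of the category of complexes, and repeatedly attach disks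
which provide primitives for all elements: any map from the separator to `B` extends to `H` so
that the image of `H` in the acyclic complex `B / I` is acyclic, being an increasing union of
subcomplexes in which every cycle of one becomes a boundary in the next.
-/

namespace DerivedProducts

section Products

open DerivedCategory

variable {C : Type u} [Category.{v} C]

/-- The homotopy between two maps to a product of complexes given by homotopies between their
components. -/
noncomputable def homotopyOfComponents [Preadditive C] {ι : Type*} {c : ComplexShape ι}
    {J : Type*} [HasProductsOfShape J C] {I : J → HomologicalComplex C c}
    {K : HomologicalComplex C c} {f g : K ⟶ ∏ᶜ I}
    (h : ∀ j, Homotopy (f ≫ Pi.π I j) (g ≫ Pi.π I j)) : Homotopy f g :=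
  have hI (q : ι) := isLimitOfPreserves (HomologicalComplex.eval C c q)
    (limit.isLimit (Discrete.functor I))
  let l (p q : ι) : K.X p ⟶ (∏ᶜ I).X q :=
    (hI q).lift ⟨K.X p, Discrete.natTrans fun j => (h j.as).hom p q⟩
  have hl (p q : ι) (j : J) : l p q ≫ (Pi.π I j).f q = (h j).hom p q := (hI q).fac _ ⟨j⟩
  have ext {T : C} {q : ι} {x y : T ⟶ (∏ᶜ I).X q}
      (hxy : ∀ j, x ≫ (Pi.π I j).f q = y ≫ (Pi.π I j).f q) : x = y :=
    (hI q).hom_ext fun ⟨j⟩ => hxy j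
  { hom := l
    zero := fun p q hpq => ext fun j => by rw [hl, (h j).zero p q hpq, zero_comp]
    comm := fun p => ext fun j => by
      have hj : f.f p ≫ (Pi.π I j).f p = _ := (h j).comm p
      simp [hj, dNext, prevD, Preadditive.add_comp, hl, ← HomologicalComplex.Hom.comm,
        reassoc_of% hl] }

variable [Abelian C]

instance isKInjective_pi {J : Type*} [HasProductsOfShape J C] (I : J → CochainComplex C ℤ)
    [∀ j, (I j).IsKInjective] : (∏ᶜ I).IsKInjective where
  nonempty_homotopy_zero f hK := ⟨homotopyOfComponents fun j =>
    (CochainComplex.IsKInjective.homotopyZero (f ≫ Pi.π I j) hK).trans (.ofEq (by simp))⟩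

variable [HasDerivedCategory.{w} C]

lemma Q_map_eq_of_homotopy {K L : CochainComplex C ℤ} {f g : K ⟶ L} (h : Homotopy f g) :
    Q.map f = Q.map g := by
  rw [← cancel_epi ((quotientCompQhIso C).hom.app K), ← NatTrans.naturality,
    ← NatTrans.naturality, Functor.comp_map, Functor.comp_map,
    HomotopyCategory.eq_of_homotopy _ _ h]

lemma Q_map_surjective (K L : CochainComplex C ℤ) [L.IsKInjective] :
    Function.Surjective (Q.map : (K ⟶ L) → (Q.obj K ⟶ Q.obj L)) := by
  intro φ
  obtain ⟨ψ, hψ⟩ := (CochainComplex.IsKInjective.Qh_map_bijective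
    ((HomotopyCategory.quotient _ _).obj K) L).surjective
    ((quotientCompQhIso C).hom.app K ≫ φ ≫ (quotientCompQhIso C).inv.app L)
  obtain ⟨f, rfl⟩ := (HomotopyCategory.quotient _ _).map_surjective ψ
  refine ⟨f, ?_⟩
  rw [← cancel_epi ((quotientCompQhIso C).hom.app K), ← NatTrans.naturality, Functor.comp_map, hψ]
  simp

lemma Q_map_eq_iff {K L : CochainComplex C ℤ} [L.IsKInjective] (f g : K ⟶ L) :
    Q.map f = Q.map g ↔ Nonempty (Homotopy f g) := by
  refine ⟨fun h => ⟨HomotopyCategory.homotopyOfEq _ _ ?_⟩, fun ⟨h⟩ => Q_map_eq_of_homotopy h⟩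
  apply (CochainComplex.IsKInjective.Qh_map_bijective
    ((HomotopyCategory.quotient _ _).obj K) L).injective
  rw [← cancel_mono ((quotientCompQhIso C).hom.app L)]
  simp [h]

lemma nonempty_isLimit_Q_fan {J : Type*} [HasProductsOfShape J C] (I : J → CochainComplex C ℤ)
    [∀ j, (I j).IsKInjective] :
    Nonempty (IsLimit (Fan.mk (Q.obj (∏ᶜ I)) fun j => Q.map (Pi.π I j))) := by
  have exists_lift (Z : DerivedCategory C) (φ : ∀ j, Z ⟶ Q.obj (I j)) :
      ∃ l : Z ⟶ Q.obj (∏ᶜ I), ∀ j, l ≫ Q.map (Pi.π I j) = φ j := by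
    choose f hf using fun j => Q_map_surjective _ _ ((Q.objObjPreimageIso Z).hom ≫ φ j)
    exact ⟨(Q.objObjPreimageIso Z).inv ≫ Q.map (Pi.lift f), fun j => by
      simp [← Functor.map_comp, hf]⟩
  have hom_ext (Z : DerivedCategory C) (l l' : Z ⟶ Q.obj (∏ᶜ I))
      (h : ∀ j, l ≫ Q.map (Pi.π I j) = l' ≫ Q.map (Pi.π I j)) : l = l' := by
    rw [← cancel_epi (Q.objObjPreimageIso Z).hom]
    obtain ⟨f, hf⟩ := Q_map_surjective _ _ ((Q.objObjPreimageIso Z).hom ≫ l)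
    obtain ⟨f', hf'⟩ := Q_map_surjective _ _ ((Q.objObjPreimageIso Z).hom ≫ l')
    have homotopy (j : J) : Nonempty (Homotopy (f ≫ Pi.π I j) (f' ≫ Pi.π I j)) := by
      rw [← Q_map_eq_iff, Functor.map_comp, Functor.map_comp, hf, hf', Category.assoc,
        Category.assoc, h]
    rw [← hf, ← hf', Q_map_eq_iff]
    exact ⟨homotopyOfComponents fun j => (homotopy j).some⟩
  choose l hl using exists_lift
  exact ⟨Fan.IsLimit.mk _ (fun s => l s.pt s.proj) (fun s j => hl _ _ j)
    (fun s m hm => hom_ext _ _ _ fun j => (hm j).trans (hl _ _ j).symm)⟩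

lemma hasProductsOfShape_derivedCategory (J : Type*) [HasProductsOfShape J C]
    (hC : ∀ X : CochainComplex C ℤ, ∃ (I : CochainComplex C ℤ) (i : X ⟶ I),
      QuasiIso i ∧ I.IsKInjective) :
    HasProductsOfShape J (DerivedCategory C) := by
  have exists_model (X : DerivedCategory C) : ∃ I : CochainComplex C ℤ, I.IsKInjective ∧
      Nonempty (Q.obj I ≅ X) := by
    obtain ⟨I, i, hi, hI⟩ := hC (Q.objPreimage X)
    exact ⟨I, hI, ⟨(asIso (Q.map i)).symm ≪≫ Q.objObjPreimageIso X⟩⟩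
  refine ⟨fun F => ?_⟩
  choose I hI e using fun j : J => exists_model (F.obj ⟨j⟩)
  obtain ⟨hl⟩ := nonempty_isLimit_Q_fan I
  have : HasLimit (Discrete.functor fun j => Q.obj (I j)) := ⟨⟨⟨_, hl⟩⟩⟩
  exact hasLimit_of_iso (F := Discrete.functor fun j => Q.obj (I j))
    (Discrete.natIso fun ⟨j⟩ => (e j).some)

end Products

section Colimits

variable {C : Type u} [Category.{v} C] [Abelian C] {J : Type*} [Category* J]
  [HasColimitsOfShape J C] [HasExactColimitsOfShape J C]

lemma exact_of_isColimit_of_homologyMap_eq_zero {F : J ⥤ ShortComplex C} {c : Cocone F}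
    (hc : IsColimit c)
    (h : ∀ j, ∃ (j' : J) (φ : j ⟶ j'), ShortComplex.homologyMap (F.map φ) = 0) :
    c.pt.Exact := by
  let S : ShortComplex (J ⥤ C) := (ShortComplex.functorEquivalence J C).inverse.obj F
  have homology_map {j j' : J} (φ : j ⟶ j') (hφ : ShortComplex.homologyMap (F.map φ) = 0) :
      S.homology.map φ = 0 := by
    change ((evaluation J C).map φ).app S.homology = 0
    have hφ' : ShortComplex.homologyMap (S.mapNatTrans ((evaluation J C).map φ)) = 0 := hφ
    rw [NatTrans.app_homology, hφ', zero_comp, comp_zero]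
  let e : S.map colim ≅ c.pt :=
    (ShortComplex.isColimitColimitCocone F).coconePointUniqueUpToIso hc
  rw [← ShortComplex.exact_iff_of_iso e, ShortComplex.exact_iff_isZero_homology]
  refine IsZero.of_iso ?_ (S.mapHomologyIso colim)
  rw [IsZero.iff_id_eq_zero]
  refine colimit.hom_ext fun j => ?_
  obtain ⟨j', φ, hφ⟩ := h j
  rw [← colimit.w S.homology φ, homology_map φ hφ]
  simp

variable {ι : Type*} {c : ComplexShape ι}

lemma exactAt_of_isColimit_of_homologyMap_eq_zero {F : J ⥤ HomologicalComplex C c}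
    {t : Cocone F} (ht : IsColimit t) (n : ι)
    (h : ∀ j, ∃ (j' : J) (φ : j ⟶ j'), HomologicalComplex.homologyMap (F.map φ) n = 0) :
    t.pt.ExactAt n := by
  have ht' : IsColimit ((HomologicalComplex.shortComplexFunctor C c n).mapCocone t) :=
    ShortComplex.isColimitOfIsColimitπ _
      (isColimitOfPreserves (HomologicalComplex.eval C c (c.prev n)) ht)
      (isColimitOfPreserves (HomologicalComplex.eval C c n) ht)
      (isColimitOfPreserves (HomologicalComplex.eval C c (c.next n)) ht)
  exact exact_of_isColimit_of_homologyMap_eq_zero ht' h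

lemma acyclic_of_isColimit {F : J ⥤ HomologicalComplex C c} {t : Cocone F} (ht : IsColimit t)
    (hF : ∀ j, (F.obj j).Acyclic) : t.pt.Acyclic := fun n =>
  exactAt_of_isColimit_of_homologyMap_eq_zero ht n fun j =>
    ⟨j, 𝟙 j, ((hF j n).isZero_homology).eq_of_src _ _⟩

end Colimits

section AcyclicMono

open MorphismProperty

variable {C : Type u} [Category.{v} C] [Abelian C] {ι : Type*} {c : ComplexShape ι}

lemma shortExact_cokernel {D : Type*} [Category* D] [Abelian D] {A B : D} (f : A ⟶ B) [Mono f] :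
    (ShortComplex.mk f (cokernel.π f) (cokernel.condition f)).ShortExact where
  exact := ShortComplex.exact_cokernel f

lemma quasiIso_f_iff_acyclic_X₃ {S : ShortComplex (HomologicalComplex C c)} (hS : S.ShortExact) :
    QuasiIso S.f ↔ S.X₃.Acyclic := by
  refine ⟨hS.acyclic_X₃, fun h => ⟨fun n => ?_⟩⟩
  have isZero (m : ι) : IsZero (S.X₃.homology m) := (h m).isZero_homology
  have : Epi (HomologicalComplex.homologyMap S.f n) :=
    (hS.homology_exact₂ n).epi_f ((isZero n).eq_of_tgt _ _)
  have : Mono (HomologicalComplex.homologyMap S.f n) := by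
    by_cases! hn : ∃ m, c.Rel m n
    · obtain ⟨m, hm⟩ := hn
      exact (hS.homology_exact₁ m n hm).mono_g ((isZero m).eq_of_src _ _)
    · have := hS.mono_f
      exact HomologicalComplex.mono_homologyMap_of_mono_of_not_rel S.f n hn
  exact (quasiIsoAt_iff_isIso_homologyMap _ _).2 (isIso_of_mono_of_epi _)

lemma quasiIso_iff_acyclic_cokernel {A B : HomologicalComplex C c} (f : A ⟶ B) [Mono f] :
    QuasiIso f ↔ (cokernel f).Acyclic :=
  quasiIso_f_iff_acyclic_X₃ (shortExact_cokernel f)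

lemma quasiIso_pullback_snd {A B H N : HomologicalComplex C c} (p : A ⟶ B) [Mono p] (f : H ⟶ B)
    (e : H ⟶ N) [Epi e] (m : N ⟶ cokernel p) [Mono m] (hem : e ≫ m = f ≫ cokernel.π p)
    (hN : N.Acyclic) : QuasiIso (pullback.snd p f) := by
  have w : pullback.snd p f ≫ e = 0 := by
    rw [← cancel_mono m, Category.assoc, hem, ← pullback.condition_assoc, cokernel.condition,
      comp_zero, zero_comp]
  have exact : (ShortComplex.mk _ e w).Exact := by
    refine ShortComplex.exact_of_f_is_kernel _ (KernelFork.IsLimit.ofι' _ _ fun {T} k hk => ?_)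
    change k ≫ e = 0 at hk
    have hk' : (k ≫ f) ≫ cokernel.π p = 0 := by
      rw [Category.assoc, ← hem, reassoc_of% hk, zero_comp]
    exact ⟨pullback.lift (Abelian.monoLift p (k ≫ f) hk') k (Abelian.monoLift_comp _ _ _),
      pullback.lift_snd _ _ _⟩
  have hS : (ShortComplex.mk _ e w).ShortExact :=
    { exact := exact, mono_f := inferInstanceAs (Mono (pullback.snd p f)), epi_g := ‹_› }
  exact (quasiIso_f_iff_acyclic_X₃ hS).2 hN

variable (C c) in
/-- The class of monomorphisms of complexes that are quasi-isomorphisms, i.e. the trivial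
cofibrations of the injective model structure. -/
def acyclicMono : MorphismProperty (HomologicalComplex C c) :=
  monomorphisms _ ⊓ HomologicalComplex.quasiIso C c

lemma acyclicMono_of_comp {A B D : HomologicalComplex C c} {f : A ⟶ B} {g : B ⟶ D} [Mono g]
    (hf : acyclicMono C _ f) (hfg : acyclicMono C _ (f ≫ g)) : acyclicMono C _ g :=
  ⟨‹_›, of_precomp (W := HomologicalComplex.quasiIso C _) f g hf.2 hfg.2⟩

instance : (acyclicMono C c).IsMultiplicative :=
  inferInstanceAs (monomorphisms _ ⊓ HomologicalComplex.quasiIso C c).IsMultiplicative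

instance : (acyclicMono C c).IsStableUnderRetracts where
  of_retract h hg := ⟨of_retract h hg.1, of_retract h hg.2⟩

instance : (acyclicMono C c).IsStableUnderCobaseChange where
  of_isPushout {A A' B B' f g f' g'} sq hf := by
    have : Mono f := hf.1
    have mono_f' : Mono f' := of_isPushout (P := monomorphisms _) sq hf.1
    have := isIso_cokernel_map_of_isPushout sq.flip
    exact ⟨mono_f', (quasiIso_iff_acyclic_cokernel f').2 fun n =>
      ((quasiIso_iff_acyclic_cokernel f).1 hf.2 n).of_iso
        (asIso (cokernel.map f f' g g' sq.w.symm))⟩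

instance {J : Type*} [Category* J] [HasColimitsOfShape J C] [HasExactColimitsOfShape J C] :
    (acyclicMono C c).IsStableUnderColimitsOfShape J where
  condition X₁ X₂ c₁ c₂ hc₁ hc₂ f hf φ hφ := by
    have mono_app (j : J) : Mono (f.app j) := (hf j).1
    have : Mono f := NatTrans.mono_of_mono_app f
    have mono_φ : Mono φ := colim.map_mono' f hc₁ hc₂ φ hφ
    let S := ShortComplex.mk f (cokernel.π f) (cokernel.condition f)
    have hS : S.ShortExact := shortExact_cokernel f
    let t := colimit.cocone S.X₃
    let g : c₂.pt ⟶ t.pt := hc₂.map t S.g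
    have hg (j : J) : c₂.ι.app j ≫ g = S.g.app j ≫ t.ι.app j := hc₂.ι_map t S.g j
    have epi_g : Epi g := colim.map_epi' S.g c₂ (colimit.isColimit _) g hg
    have hS' : (colim.mapShortComplex S hc₁ c₂ t φ g hφ hg).ShortExact :=
      { mono_f := mono_φ
        epi_g := epi_g
        exact := colim.exact_mapShortComplex hS.exact hc₁ hc₂ (colimit.isColimit _) φ g hφ hg }
    refine ⟨mono_φ, (quasiIso_f_iff_acyclic_X₃ hS').2 ?_⟩
    refine acyclic_of_isColimit (colimit.isColimit S.X₃) fun j => ?_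
    exact (quasiIso_f_iff_acyclic_X₃ (hS.map_of_exact ((evaluation J _).obj j))).1 (hf j).2

end AcyclicMono

section KInjective

open CochainComplex HomComplex

variable {C : Type u} [Category.{v} C] [Abelian C]

lemma quasiIso_mappingCone_inr {K L : CochainComplex C ℤ} (f : K ⟶ L) (hK : K.Acyclic) :
    QuasiIso (mappingCone.inr f) := by
  rw [← HomologicalComplex.mem_quasiIso_iff, ← HomotopyCategory.quotient_map_mem_quasiIso_iff,
    HomotopyCategory.quasiIso_eq_trW_subcategoryAcyclic]
  exact ObjectProperty.trW.mk' _ (HomotopyCategory.mappingCone_triangleh_distinguished f)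
    ((HomotopyCategory.quotient_obj_mem_subcategoryAcyclic_iff_acyclic K).2 hK)

lemma mono_mappingCone_inr {K L : CochainComplex C ℤ} (f : K ⟶ L) : Mono (mappingCone.inr f) :=
  have (n : ℤ) : Mono ((mappingCone.inr f).f n) :=
    mono_of_mono_fac (mappingCone.inr_f_snd_v f n)
  HomologicalComplex.mono_of_mono_f _ this

lemma nonempty_homotopy_zero_of_isSplitMono_inr {K L : CochainComplex C ℤ} (f : K ⟶ L)
    [IsSplitMono (mappingCone.inr f)] : Nonempty (Homotopy f 0) := by
  let r : mappingCone f ⟶ L := retraction (mappingCone.inr f)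
  have hr : mappingCone.inr f ≫ r = 𝟙 L := IsSplitMono.id _
  refine ⟨(Cochain.equivHomotopy f 0).symm
    ⟨(mappingCone.inl f).comp (Cochain.ofHom r) (add_zero _), ?_⟩⟩
  rw [Cochain.ofHom_zero, add_zero, δ_comp_ofHom, mappingCone.δ_inl, ← Cochain.ofHom_comp,
    Category.assoc, hr, Category.comp_id]

lemma isKInjective_of_isSplitMono (I : CochainComplex C ℤ)
    (hI : ∀ ⦃B : CochainComplex C ℤ⦄ (p : I ⟶ B), acyclicMono C _ p → IsSplitMono p) :
    I.IsKInjective where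
  nonempty_homotopy_zero f hK :=
    have := hI _ ⟨mono_mappingCone_inr f, quasiIso_mappingCone_inr f hK⟩
    nonempty_homotopy_zero_of_isSplitMono_inr f

end KInjective

section MaximalQuotient

variable {D : Type u} [Category.{v} D] [Abelian D] {W : MorphismProperty D}

/-- The functor sending a subobject `S` of `B` to the quotient `B / S`. -/
noncomputable def quotientFunctor (B : D) : Subobject B ⥤ D where
  obj S := cokernel S.arrow
  map {S T} h := cokernel.desc S.arrow (cokernel.π T.arrow)
    (by rw [← Subobject.ofLE_arrow (leOfHom h), Category.assoc, cokernel.condition, comp_zero])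

lemma π_comp_quotientFunctor_map {B : D} {S T : Subobject B} (h : S ⟶ T) :
    cokernel.π S.arrow ≫ (quotientFunctor B).map h = cokernel.π T.arrow :=
  cokernel.π_desc _ _ _

instance isIso_cokernel_desc_kernelSubobject {B Q : D} (g : B ⟶ Q) [Epi g] :
    IsIso (cokernel.desc _ g (kernelSubobject_arrow_comp g)) := by
  have h : kernel.ι g ≫ cokernel.π (kernelSubobject g).arrow = 0 := by
    rw [← kernelSubobject_arrow', Category.assoc, cokernel.condition, comp_zero]
  exact ⟨Abelian.epiDesc g _ h, by ext; simp, by rw [← cancel_epi g]; simp⟩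

lemma comp_cokernel_π_kernelSubobject_mem_iff [W.RespectsIso] {I B Q : D} (p : I ⟶ B) (g : B ⟶ Q)
    [Epi g] : W (p ≫ cokernel.π (kernelSubobject g).arrow) ↔ W (p ≫ g) := by
  rw [← W.cancel_right_of_respectsIso _ (cokernel.desc _ g (kernelSubobject_arrow_comp g)),
    Category.assoc, cokernel.π_desc]

lemma exists_le_of_directed [W.RespectsIso] {I B : D} (p : I ⟶ B) {J : Type*} [Preorder J]
    [IsDirectedOrder J] [Nonempty J] [HasColimitsOfShape J D] [W.IsStableUnderColimitsOfShape J]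
    (S : J →o Subobject B) (hS : ∀ j, W (p ≫ cokernel.π (S j).arrow)) :
    ∃ T, (∀ j, S j ≤ T) ∧ W (p ≫ cokernel.π T.arrow) := by
  have : IsConnected J := IsFiltered.isConnected J
  let F : J ⥤ D := S.monotone.functor ⋙ quotientFunctor B
  let π : (Functor.const J).obj B ⟶ F :=
    { app j := cokernel.π (S j).arrow
      naturality _ _ h := (Category.id_comp _).trans
        (π_comp_quotientFunctor_map (S.monotone.functor.map h)).symm }
  have (j : J) : Epi (π.app j) := inferInstanceAs (Epi (cokernel.π (S j).arrow))
  let g : B ⟶ colimit F := (isColimitConstCocone J B).map (colimit.cocone F) π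
  have hg (j : J) : 𝟙 B ≫ g = π.app j ≫ colimit.ι F j :=
    (isColimitConstCocone J B).ι_map (colimit.cocone F) π j
  have : Epi g := colim.map_epi' π (constCocone J B) (colimit.isColimit F) g hg
  refine ⟨kernelSubobject g, fun j => le_kernelSubobject _ _ ?_,
    (comp_cokernel_π_kernelSubobject_mem_iff p g).2 ?_⟩
  · have hj : (S j).arrow ≫ π.app j = 0 := cokernel.condition _
    rw [← Category.id_comp g, hg j, reassoc_of% hj, zero_comp]
  · refine MorphismProperty.IsStableUnderColimitsOfShape.condition _ _ _ _
      (isColimitConstCocone J I) (colimit.isColimit F) ((Functor.const J).map p ≫ π) hS _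
      fun j => ?_
    rw [← Category.id_comp g, hg j]
    exact (Category.id_comp _).trans (Category.assoc p (π.app j) (colimit.ι F j)).symm

instance isDirectedOrder_shrink (α : Type*) [Preorder α] [IsDirectedOrder α] [Small.{w} α] :
    IsDirectedOrder (Shrink.{w} α) where
  directed a b := by
    let e := orderIsoShrink.{w} α
    obtain ⟨z, ha, hb⟩ := exists_ge_ge (e.symm a) (e.symm b)
    exact ⟨e z, (e.symm_apply_le).1 ha, (e.symm_apply_le).1 hb⟩

lemma exists_maximal_subobject [HasFilteredColimitsOfSize.{w, w} D] [LocallySmall.{w} D]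
    [WellPowered.{w} D] [W.RespectsIso] [W.IsStableUnderFilteredColimits.{w, w}] {I B : D}
    (p : I ⟶ B) (hp : W p) :
    ∃ S : Subobject B, Maximal (fun S => W (p ≫ cokernel.π S.arrow)) S := by
  have hbot : W (p ≫ cokernel.π (⊥ : Subobject B).arrow) := by
    have : IsIso (cokernel.π (⊥ : Subobject B).arrow) := by
      rw [Subobject.bot_arrow]; infer_instance
    rwa [W.cancel_right_of_respectsIso]
  obtain ⟨S, -, hS⟩ := zorn_le_nonempty₀ {S : Subobject B | W (p ≫ cokernel.π S.arrow)}
    (fun c hc hc' S hS => by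
      have : Nonempty (Shrink.{w} c) := ⟨equivShrink c ⟨S, hS⟩⟩
      have := hc'.directedOn.isDirectedOrder
      obtain ⟨T, hT, hT'⟩ := exists_le_of_directed (W := W) p
        ⟨fun j => ((orderIsoShrink.{w} c).symm j).1,
          fun _ _ h => (orderIsoShrink c).symm.monotone h⟩
        (fun j => hc (Subtype.prop _))
      exact ⟨T, hT', fun S hS => by simpa using hT (orderIsoShrink c ⟨S, hS⟩)⟩) ⊥ hbot
  exact ⟨S, hS⟩

lemma mono_of_maximal_subobject [W.RespectsIso] {I B B' : D} {p : I ⟶ B} {S : Subobject B}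
    (hS : Maximal (fun S => W (p ≫ cokernel.π S.arrow)) S) (r : cokernel S.arrow ⟶ B') [Epi r]
    (hr : W (p ≫ cokernel.π S.arrow ≫ r)) : Mono r := by
  let T := kernelSubobject (cokernel.π S.arrow ≫ r)
  have hST : S ≤ T := le_kernelSubobject _ _ (by simp)
  have hT : W (p ≫ cokernel.π T.arrow) := by
    rwa [comp_cokernel_π_kernelSubobject_mem_iff (W := W)]
  have hTS : T.arrow ≫ cokernel.π S.arrow = 0 := by
    rw [← Subobject.ofLE_arrow (hS.le_of_ge hT hST), Category.assoc, cokernel.condition, comp_zero]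
  have hker : kernel.ι (cokernel.π S.arrow ≫ r) ≫ cokernel.π S.arrow = 0 := by
    rw [← kernelSubobject_arrow', Category.assoc, hTS, comp_zero]
  have hfac : r ≫ Abelian.epiDesc (cokernel.π S.arrow ≫ r) _ hker = 𝟙 _ := by
    rw [← cancel_epi (cokernel.π S.arrow), ← Category.assoc, Abelian.comp_epiDesc,
      Category.comp_id]
  exact SplitMono.mono ⟨_, hfac⟩

lemma isSplitMono_of_forall_exists_epi [HasFilteredColimitsOfSize.{w, w} D] [LocallySmall.{w} D]
    [WellPowered.{w} D] [W.RespectsIso] [W.IsStableUnderFilteredColimits.{w, w}] {I : D}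
    (hI : ∀ ⦃B : D⦄ (q : I ⟶ B), W q → ¬ IsIso q →
      ∃ (B' : D) (r : B ⟶ B'), Epi r ∧ ¬ Mono r ∧ W (q ≫ r))
    {B : D} (p : I ⟶ B) (hp : W p) : IsSplitMono p := by
  obtain ⟨S, hS⟩ := exists_maximal_subobject p hp
  have hq : IsIso (p ≫ cokernel.π S.arrow) := by
    by_contra hq
    obtain ⟨B', r, _, hr, hW⟩ := hI _ hS.prop hq
    exact hr (mono_of_maximal_subobject hS r (by rwa [← Category.assoc]))
  exact ⟨⟨⟨cokernel.π S.arrow ≫ inv (p ≫ cokernel.π S.arrow), by simp [← Category.assoc]⟩⟩⟩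

end MaximalQuotient

section SmallObject

open MorphismProperty
open scoped ZeroObject

variable {C : Type u} [Category.{v} C] [Abelian C] {ι : Type*} {c : ComplexShape ι}

/-- `H` is a test object for acyclic monomorphisms if each acyclic monomorphism `p : A ⟶ B` which
is not an isomorphism admits a morphism `H ⟶ B` that does not factor through `p` and along which
`p` pulls back to a quasi-isomorphism. -/
def IsTestObject (H : HomologicalComplex C c) : Prop :=
  ∀ ⦃A B : HomologicalComplex C c⦄ (p : A ⟶ B), acyclicMono C _ p → ¬ IsIso p →
    ∃ f : H ⟶ B, (¬ ∃ g, g ≫ p = f) ∧ acyclicMono C _ (pullback.snd p f)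

/-- The generating set of the small object argument: the inclusions in `H` of its quasi-isomorphic
subcomplexes. -/
def generators (H : HomologicalComplex C c) : MorphismProperty (HomologicalComplex C c) :=
  ofHoms (fun R : {R : Subobject H // QuasiIso R.arrow} ↦ R.1.arrow)

lemma generators_le_acyclicMono (H : HomologicalComplex C c) : generators H ≤ acyclicMono C _ := by
  rintro _ _ _ ⟨R⟩
  exact ⟨inferInstanceAs (Mono R.1.arrow), R.2⟩

lemma hasLiftingProperty_of_rlp_generators {H R : HomologicalComplex C c} {i : R ⟶ H}
    (hi : acyclicMono C _ i) {X Y : HomologicalComplex C c} {p : X ⟶ Y}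
    (hp : (generators H).rlp p) : HasLiftingProperty i p := by
  have : Mono i := hi.1
  have hR : QuasiIso (Subobject.mk i).arrow := by
    have : QuasiIso i := hi.2
    rw [← Subobject.underlyingIso_hom_comp_eq_mk]
    infer_instance
  have := hp _ (ofHoms.mk (f := fun R : {R : Subobject H // QuasiIso R.arrow} ↦ R.1.arrow)
    ⟨Subobject.mk i, hR⟩)
  rw [← Subobject.underlyingIso_arrow i]
  infer_instance

lemma exists_extension {I R H : HomologicalComplex C c} (hI : (generators H).rlp (0 : I ⟶ 0))
    {i : R ⟶ H} (hi : acyclicMono C _ i) (g : R ⟶ I) : ∃ h : H ⟶ I, i ≫ h = g :=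
  have := hasLiftingProperty_of_rlp_generators hi hI
  ⟨(CommSq.mk (show g ≫ (0 : I ⟶ 0) = i ≫ 0 by simp)).lift, CommSq.fac_left _⟩

lemma exists_acyclicMono_retraction {H I B : HomologicalComplex C c} (q : I ⟶ B) (f : H ⟶ B)
    (hq : acyclicMono C _ q) (hi : acyclicMono C _ (pullback.snd q f)) (h : H ⟶ I)
    (hh : pullback.snd q f ≫ h = pullback.fst q f) :
    ∃ (P : HomologicalComplex C c) (i : I ⟶ P) (j : P ⟶ B) (ρ : P ⟶ I), acyclicMono C _ j ∧
      i ≫ j = q ∧ i ≫ ρ = 𝟙 I ∧ ∃ b : H ⟶ P, b ≫ j = f := by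
  have : Mono q := hq.1
  let inl : I ⟶ pushout (pullback.fst q f) (pullback.snd q f) := pushout.inl _ _
  let j : pushout (pullback.fst q f) (pullback.snd q f) ⟶ B :=
    pushout.desc q f pullback.condition
  have inl_j : inl ≫ j = q := pushout.inl_desc _ _ _
  have inr_j : pushout.inr _ _ ≫ j = f := pushout.inr_desc _ _ _
  have hinl : acyclicMono C _ inl := of_isPushout (IsPushout.of_hasPushout _ _) hi
  have : Mono j := (IsPushout.of_hasPushout _ _).mono_of_isPullback_of_mono
    (IsPullback.of_hasPullback q f) _ inl_j inr_j
  have hj : acyclicMono C _ j := acyclicMono_of_comp hinl (by rwa [inl_j])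
  exact ⟨_, inl, j, pushout.desc (𝟙 I) h (by rw [Category.comp_id, hh]), hj, inl_j,
    pushout.inl_desc _ _ _, _, inr_j⟩

lemma exists_epi_not_mono {H : HomologicalComplex C c} (hH : IsTestObject H)
    {I : HomologicalComplex C c} (hI : (generators H).rlp (0 : I ⟶ 0)) {B : HomologicalComplex C c}
    (q : I ⟶ B) (hq : acyclicMono C _ q) (hq' : ¬ IsIso q) :
    ∃ (B' : HomologicalComplex C c) (r : B ⟶ B'), Epi r ∧ ¬ Mono r ∧ acyclicMono C _ (q ≫ r) := by
  obtain ⟨f, hf, hi⟩ := hH q hq hq'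
  obtain ⟨h, hh⟩ := exists_extension hI hi (pullback.fst q f)
  obtain ⟨P, i, j, ρ, hj, hij, hiρ, b, hb⟩ := exists_acyclicMono_retraction q f hq hi h hh
  have : Epi ρ := SplitEpi.epi ⟨i, hiρ⟩
  have hqr : q ≫ pushout.inr ρ j = pushout.inl ρ j := by
    rw [← hij, Category.assoc, ← pushout.condition, reassoc_of% hiρ]
  refine ⟨_, pushout.inr ρ j, inferInstance, fun _ => ?_, ?_⟩
  · have hjρ : j = ρ ≫ q := by
      rw [← cancel_mono (pushout.inr ρ j), Category.assoc, hqr, pushout.condition]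
    exact hf ⟨b ≫ ρ, by rw [Category.assoc, ← hjρ, hb]⟩
  · rw [hqr]
    exact of_isPushout (IsPushout.of_hasPushout _ _) hj

variable [IsGrothendieckAbelian.{v} C]

instance : (acyclicMono C c).IsStableUnderFilteredColimits.{v, v} where
  isStableUnderColimitsOfShape _ _ _ := inferInstance

instance : IsStableUnderCoproducts.{v} (acyclicMono C c) where
  isStableUnderCoproductsOfShape J := by
    have := IsGrothendieckAbelian.ab4OfSize.{v} C
    infer_instance

instance hasSmallObjectArgument_generators (H : CochainComplex C ℤ) :
    HasSmallObjectArgument.{v} (generators H) := by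
  obtain ⟨κ, hκ, hκH⟩ := HasCardinalLT.exists_regular_cardinal.{v} (Subobject H)
  have : Fact κ.IsRegular := ⟨hκ⟩
  have : Nonempty κ.ord.ToType := by simpa using hκ.ne_zero
  have := WellFoundedLT.toOrderBot κ.ord.ToType
  have : MorphismProperty.IsSmall.{v} (generators H) := by
    unfold generators; infer_instance
  refine ⟨κ, inferInstance, inferInstance, { preservesColimit i hi f hf := ?_ }⟩
  have cells_le :
      (coproducts.{v} (ofHoms (generators H).homFamily)).pushouts ≤ monomorphisms _ := by
    rw [ofHoms_homFamily, pushouts_le_iff, coproducts_le_iff]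
    exact fun _ _ _ h => (generators_le_acyclicMono H _ h).1
  let hf' : (monomorphisms _).TransfiniteCompositionOfShape κ.ord.ToType f :=
    { toTransfiniteCompositionOfShape := hf.toTransfiniteCompositionOfShape
      map_mem j hj := cells_le _ (hf.attachCells j hj).pushouts_coproducts }
  have (j j' : κ.ord.ToType) (φ : j ⟶ j') : Mono (hf'.F.map φ) := hf'.mem_map φ
  obtain ⟨R⟩ := hi
  exact IsGrothendieckAbelian.preservesColimit_coyoneda_obj_of_mono (Y := hf'.F) (κ := κ)
    (Subobject.hasCardinalLT_of_mono hκH R.1.arrow)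

lemma llp_rlp_generators_le (H : CochainComplex C ℤ) :
    (generators H).rlp.llp ≤ acyclicMono C _ := by
  rw [llp_rlp_of_hasSmallObjectArgument (generators H), retracts_le_iff,
    transfiniteCompositions_le_iff, pushouts_le_iff, coproducts_le_iff]
  exact generators_le_acyclicMono H

lemma IsTestObject.exists_isKInjective {H : CochainComplex C ℤ} (hH : IsTestObject H)
    (X : CochainComplex C ℤ) :
    ∃ (I : CochainComplex C ℤ) (i : X ⟶ I), QuasiIso i ∧ I.IsKInjective := by
  let fac := (functorialFactorizationData (generators H).rlp.llp
    (generators H).rlp).factorizationData (0 : X ⟶ 0)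
  have hI : (generators H).rlp (0 : fac.Z ⟶ 0) := by
    rw [← (isZero_zero _).eq_of_tgt fac.p 0]; exact fac.hp
  exact ⟨fac.Z, fac.i, (llp_rlp_generators_le H _ fac.hi).2, isKInjective_of_isSplitMono _
    fun _ => isSplitMono_of_forall_exists_epi fun _ => exists_epi_not_mono hH hI⟩

end SmallObject

section AttachDisks

variable {C : Type u} [Category.{v} C] [Abelian C]

/-- The disk complex `G = G` in degrees `n` and `n + 1`: morphisms from it to `X` are
morphisms `G ⟶ X.X n`. -/
noncomputable abbrev disk (G : C) (n : ℤ) : CochainComplex C ℤ :=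
  HomologicalComplex.evalCompCoyonedaCorepresentative (ComplexShape.up ℤ) G n

lemma exists_comp_eq_of_disk (G : C) (n : ℤ) {X Y : CochainComplex C ℤ} (i : disk G n ⟶ X)
    (f : X ⟶ Y) (g : G ⟶ Y.X n)
    (h : i ≫ f = (HomologicalComplex.evalCompCoyonedaCorepresentable _ G n).homEquiv.symm g) :
    ∃ s : G ⟶ X.X n, s ≫ f.f n = g := by
  let R := HomologicalComplex.evalCompCoyonedaCorepresentable (ComplexShape.up ℤ) G n
  refine ⟨R.homEquiv i, ?_⟩
  rw [← R.homEquiv.apply_symm_apply g, ← h, R.homEquiv_comp]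
  rfl

variable [HasColimitsOfSize.{v, v} C]

/-- `H` with a free disk of shape `G` attached for each `e : G ⟶ H.X (n + 1)`. The disk carries a
candidate for a primitive of the image of `e` in a complex to which `H` maps. -/
noncomputable def attachDisks (G : C) (H : CochainComplex C ℤ) : CochainComplex C ℤ :=
  H ⨿ ∐ fun x : Σ n : ℤ, G ⟶ H.X (n + 1) => disk G x.1

/-- The inclusion of `H` in the complex obtained by attaching disks to it. -/
noncomputable def toAttachDisks (G : C) (H : CochainComplex C ℤ) : H ⟶ attachDisks G H :=
  coprod.inl

lemma exists_attachDisks_desc {G : C} {H B : CochainComplex C ℤ} (f : H ⟶ B)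
    (g : ∀ n : ℤ, (G ⟶ H.X (n + 1)) → (G ⟶ B.X n)) :
    ∃ f' : attachDisks G H ⟶ B, toAttachDisks G H ≫ f' = f ∧
      ∀ (n : ℤ) (e : G ⟶ H.X (n + 1)), ∃ s : G ⟶ (attachDisks G H).X n, s ≫ f'.f n = g n e := by
  let φ (x : Σ n : ℤ, G ⟶ H.X (n + 1)) : disk G x.1 ⟶ B :=
    (HomologicalComplex.evalCompCoyonedaCorepresentable _ G x.1).homEquiv.symm (g x.1 x.2)
  refine ⟨coprod.desc f (Sigma.desc φ), coprod.inl_desc _ _, fun n e => ?_⟩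
  have hφ : (Sigma.ι (fun x : Σ n : ℤ, G ⟶ H.X (n + 1) => disk G x.1) ⟨n, e⟩ ≫ coprod.inr) ≫
      coprod.desc f (Sigma.desc φ) = φ ⟨n, e⟩ := by
    rw [Category.assoc, coprod.inr_desc, Sigma.ι_desc]
  exact exists_comp_eq_of_disk G n _ _ _ hφ

/-- If the image under `q` of a `G`-element `e` of `H` is the boundary of a `G`-element coming
from `B`, then it is the boundary of one coming from `H'`. -/
def LiftsBoundaries (G : C) {H H' B K : CochainComplex C ℤ} (π : B ⟶ K) (q : H ⟶ K)
    (q' : H' ⟶ K) : Prop :=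
  ∀ (n : ℤ) (e : G ⟶ H.X (n + 1)),
    (∃ g : G ⟶ B.X n, g ≫ π.f n ≫ K.d n (n + 1) = e ≫ q.f (n + 1)) →
      ∃ s : G ⟶ H'.X n, s ≫ q'.f n ≫ K.d n (n + 1) = e ≫ q.f (n + 1)

lemma exists_attachDisks_desc_liftsBoundaries (G : C) {H B K : CochainComplex C ℤ} (π : B ⟶ K)
    (f : H ⟶ B) : ∃ f' : attachDisks G H ⟶ B,
      toAttachDisks G H ≫ f' = f ∧ LiftsBoundaries G π (f ≫ π) (f' ≫ π) := by
  classical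
  obtain ⟨f', hf', hs⟩ := exists_attachDisks_desc f fun n e =>
    if h : ∃ g : G ⟶ B.X n, g ≫ π.f n ≫ K.d n (n + 1) = e ≫ (f ≫ π).f (n + 1)
    then h.choose else 0
  refine ⟨f', hf', fun n e h => ?_⟩
  obtain ⟨s, hs⟩ := hs n e
  rw [dif_pos h] at hs
  refine ⟨s, ?_⟩
  rw [HomologicalComplex.comp_f, Category.assoc, reassoc_of% hs, h.choose_spec]

/-- The stages of the construction which repeatedly attaches disks to `H`. -/
noncomputable def diskTower (G : C) (H : CochainComplex C ℤ) : ℕ → CochainComplex C ℤ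
  | 0 => H
  | k + 1 => attachDisks G (diskTower G H k)

/-- The functor given by the inclusions between successive stages of `diskTower`. -/
noncomputable def diskTowerFunctor (G : C) (H : CochainComplex C ℤ) : ℕ ⥤ CochainComplex C ℤ :=
  Functor.ofSequence (X := diskTower G H) fun k => toAttachDisks G (diskTower G H k)

lemma exists_diskTowerFunctor_desc (G : C) {H B K : CochainComplex C ℤ} (π : B ⟶ K) (f₀ : H ⟶ B) :
    ∃ f : diskTowerFunctor G H ⟶ (Functor.const ℕ).obj B, f.app 0 = f₀ ∧
      ∀ k, LiftsBoundaries G π (f.app k ≫ π) (f.app (k + 1) ≫ π) := by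
  choose next next_fac next_lifts using
    fun (H : CochainComplex C ℤ) (f : H ⟶ B) => exists_attachDisks_desc_liftsBoundaries G π f
  let f (k : ℕ) : diskTower G H k ⟶ B :=
    Nat.rec (motive := fun k => diskTower G H k ⟶ B) f₀ (fun _ => next _) k
  refine ⟨NatTrans.ofSequence f fun k => ?_, rfl, fun k => next_lifts _ (f k)⟩
  exact ((congrArg (· ≫ f (k + 1)) (Functor.ofSequence_map_homOfLE_succ _ k)).trans
    (next_fac _ (f k))).trans (Category.comp_id _).symm

end AttachDisks

section TestObject

variable {C : Type u} [Category.{v} C] [Abelian C]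

lemma exists_refinement_eq_boundary {B K : CochainComplex C ℤ} (hK : K.Acyclic) (π : B ⟶ K) [Epi π]
    {n : ℤ} {T : C} (x : T ⟶ K.X (n + 1)) (hx : x ≫ K.d (n + 1) (n + 1 + 1) = 0) :
    ∃ (P : C) (t : P ⟶ T) (_ : Epi t) (g : P ⟶ B.X n), g ≫ π.f n ≫ K.d n (n + 1) = t ≫ x := by
  obtain ⟨A, t, _, y, hy⟩ := (K.exactAt_iff_exact_up_to_refinements n (n + 1) (n + 1 + 1)
    (by simp) (by simp)).1 (hK (n + 1)) x hx
  exact ⟨pullback y (π.f n), pullback.fst _ _ ≫ t, epi_comp _ _, pullback.snd _ _, by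
    rw [← pullback.condition_assoc, Category.assoc, hy]⟩

lemma homologyMap_eq_zero_of_liftsBoundaries {G : C} (hG : IsSeparator G)
    {H H' N N' B K : CochainComplex C ℤ} (hK : K.Acyclic) (π : B ⟶ K) [Epi π]
    (e : H ⟶ N) [Epi e] (m : N ⟶ K) (e' : H' ⟶ N') (m' : N' ⟶ K) [Mono m'] (j : N ⟶ N')
    (hj : j ≫ m' = m) (h : LiftsBoundaries G π (e ≫ m) (e' ≫ m')) (n : ℤ) :
    HomologicalComplex.homologyMap j (n + 1) = 0 := by
  let a : pullback (N.iCycles (n + 1)) (e.f (n + 1)) ⟶ N.cycles (n + 1) := pullback.fst _ _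
  let x : pullback (N.iCycles (n + 1)) (e.f (n + 1)) ⟶ H.X (n + 1) := pullback.snd _ _
  have hax : a ≫ N.iCycles (n + 1) = x ≫ e.f (n + 1) := pullback.condition
  have hx : (x ≫ (e ≫ m).f (n + 1)) ≫ K.d (n + 1) (n + 1 + 1) = 0 := by
    rw [HomologicalComplex.comp_f, ← reassoc_of% hax, Category.assoc, Category.assoc, m.comm,
      HomologicalComplex.iCycles_d_assoc, zero_comp, comp_zero]
  obtain ⟨P, t, _, g, hg⟩ := exists_refinement_eq_boundary hK π _ hx
  rw [← cancel_epi (N.homologyπ (n + 1)), HomologicalComplex.homologyπ_naturality, comp_zero,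
    ← cancel_epi a, ← cancel_epi t, comp_zero, comp_zero]
  refine hG.def _ _ fun y => ?_
  obtain ⟨s, hs⟩ := h n (y ≫ t ≫ x) ⟨y ≫ g, by simp only [Category.assoc, hg]⟩
  have boundary : y ≫ t ≫ a ≫ HomologicalComplex.cyclesMap j (n + 1) =
      s ≫ e'.f n ≫ N'.toCycles n (n + 1) := by
    rw [← cancel_mono (N'.iCycles (n + 1)), ← cancel_mono (m'.f (n + 1))]
    simp only [Category.assoc, HomologicalComplex.cyclesMap_i_assoc, reassoc_of% hax,
      HomologicalComplex.toCycles_i_assoc, ← HomologicalComplex.comp_f, hj]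
    simpa using hs.symm
  rw [comp_zero, reassoc_of% boundary, HomologicalComplex.toCycles_comp_homologyπ, comp_zero,
    comp_zero]

lemma exists_acyclic_image {G : C} (hG : IsSeparator G) [HasColimitsOfShape ℕ C]
    [HasExactColimitsOfShape ℕ C] {F : ℕ ⥤ CochainComplex C ℤ} {B K : CochainComplex C ℤ}
    (hK : K.Acyclic) (π : B ⟶ K) [Epi π] (f : F ⟶ (Functor.const ℕ).obj B)
    (hf : ∀ k, LiftsBoundaries G π (f.app k ≫ π) (f.app (k + 1) ≫ π)) (f' : colimit F ⟶ B)
    (hf' : ∀ k, colimit.ι F k ≫ f' = f.app k) :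
    ∃ (N : CochainComplex C ℤ) (e : colimit F ⟶ N) (m : N ⟶ K),
      N.Acyclic ∧ Epi e ∧ Mono m ∧ e ≫ m = f' ≫ π := by
  let q : F ⟶ (Functor.const ℕ).obj K := f ≫ (Functor.const ℕ).map π
  let N : ℕ ⥤ CochainComplex C ℤ := Abelian.image q
  let e : F ⟶ N := Abelian.factorThruImage q
  let m : N ⟶ (Functor.const ℕ).obj K := Abelian.image.ι q
  have hem (k : ℕ) : e.app k ≫ m.app k = f.app k ≫ π :=
    NatTrans.congr_app (Abelian.image.fac q) k
  let e' : colimit F ⟶ colimit N := colimMap e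
  let m' : colimit N ⟶ K := colimit.desc N ⟨K, m⟩
  have hm' (k : ℕ) : colimit.ι N k ≫ m' = m.app k ≫ 𝟙 K := by simp [m']
  refine ⟨colimit N, e', m', fun n => ?_, ?_, ?_, ?_⟩
  · obtain ⟨n, rfl⟩ : ∃ i, n = i + 1 := ⟨n - 1, by simp⟩
    refine exactAt_of_isColimit_of_homologyMap_eq_zero (colimit.isColimit N) _
      fun k => ⟨k + 1, homOfLE k.le_succ, ?_⟩
    refine homologyMap_eq_zero_of_liftsBoundaries hG hK π (e.app k) (m.app k) (e.app (k + 1))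
      (m.app (k + 1)) _ (by simp) ?_ n
    rw [hem, hem]
    exact hf k
  · infer_instance
  · exact colim.map_mono' m (colimit.isColimit N) (isColimitConstCocone ℕ K) m' hm'
  · refine colimit.hom_ext fun k => ?_
    rw [ι_colimMap_assoc, colimit.ι_desc, reassoc_of% hf' k, hem]

lemma exists_not_factoring {D : Type*} [Category* D] [Balanced D] {G : D} (hG : IsSeparator G)
    {A B : D} (p : A ⟶ B) [Mono p] (hp : ¬ IsIso p) : ∃ f : G ⟶ B, ¬ ∃ g, g ≫ p = f := by
  contrapose! hp
  exact (hG.isDetector.isIso_iff_of_mono p).2 (by simpa [Function.Surjective] using hp)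

variable [IsGrothendieckAbelian.{v} C]

variable (C) in
lemma exists_isTestObject : ∃ H : CochainComplex C ℤ, IsTestObject H := by
  have : HasColimitsOfSize.{0, 0} C := hasColimitsOfSizeOfUnivLE.{v, v} C
  have : AB5OfSize.{0, 0} C := AB5OfSize_of_univLE C
  have : HasExactColimitsOfShape ℕ C := AB5OfSize.ofShape ℕ
  let F := diskTowerFunctor (separator C) (separator (CochainComplex C ℤ))
  refine ⟨colimit F, fun A B p hp hp' => ?_⟩
  have : Mono p := hp.1
  obtain ⟨f₀, hf₀⟩ := exists_not_factoring (isSeparator_separator _) p hp'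
  obtain ⟨f, hf, lifts⟩ := exists_diskTowerFunctor_desc (separator C) (cokernel.π p) f₀
  let f' : colimit F ⟶ B := colimit.desc F ⟨B, f⟩
  obtain ⟨N, e, m, hN, _, _, hem⟩ := exists_acyclic_image (isSeparator_separator C)
    ((quasiIso_iff_acyclic_cokernel p).1 hp.2) (cokernel.π p) f lifts f' (colimit.ι_desc _)
  refine ⟨f', ?_, inferInstanceAs (Mono (pullback.snd p f')),
    quasiIso_pullback_snd p f' e m hem hN⟩
  rintro ⟨g, hg⟩
  have hg₀ : (colimit.ι F 0 ≫ g) ≫ p = f.app 0 := by rw [Category.assoc, hg, colimit.ι_desc]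
  exact hf₀ ⟨colimit.ι F 0 ≫ g, hg₀.trans hf⟩

end TestObject

end DerivedProducts

/-- The unbounded derived category of a Grothendieck abelian category (an abelian
category with small colimits, exact filtered colimits and a separator) admits
arbitrary small products. -/
theorem DerivedCategory.hasProducts_of_grothendieckAbelian
    (C : Type u) [Category.{v} C] [Abelian C] [HasColimits C]
    [AB5 C] [HasSeparator C] [HasDerivedCategory.{w} C] :
    HasProducts.{v} (DerivedCategory C) := by
  have : HasFilteredColimitsOfSize.{v, v} C := ⟨fun _ _ _ => inferInstance⟩
  have : AB5OfSize.{v, v} C := inferInstance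
  have : IsGrothendieckAbelian.{v} C := { }
  have : HasLimitsOfSize.{v, v} C := inferInstance
  obtain ⟨H, hH⟩ := DerivedProducts.exists_isTestObject C
  exact fun J => DerivedProducts.hasProductsOfShape_derivedCategory J hH.exists_isKInjective
end

section
/- Let A be a commutative ring and let X and L be A-modules. Suppose there is a natural isomorphism of functors on the category of A-modules between M ↦ X ⊗_A M and M ↦ Hom_A(L, M). Then L is a finitely generated projective A-module and X is isomorphic to the dual module Hom_A(L, A). -/
/-!
Naturality along the maps `a ↦ a • m : A → M` determines a natural transformation
`X ⊗ M → Hom(L, M)` from its component `X ≅ X ⊗ A → Hom(L, A)` at `A`: each component at `M`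
factors through the canonical map `Hom(L, A) ⊗ M → Hom(L, M)`. If the component at `L` hits the
identity of `L`, then so does `Hom(L, A) ⊗ L → Hom(L, L)`, and any preimage of the identity
under this map, written as a finite sum of pure tensors, is a dual basis of `L`.
-/

open TensorProduct

universe u

section

variable {A X L M : Type*} [CommSemiring A]
  [AddCommMonoid X] [Module A X] [AddCommMonoid L] [Module A L] [AddCommMonoid M] [Module A M]

theorem eq_dualTensorHom_comp_rTensor_of_natural
    {α : X ⊗[A] A →ₗ[A] (L →ₗ[A] A)} {β : X ⊗[A] M →ₗ[A] (L →ₗ[A] M)}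
    (nat : ∀ (f : A →ₗ[A] M) (t : X ⊗[A] A), β (f.lTensor X t) = f ∘ₗ α t) :
    β = dualTensorHom A L M ∘ₗ (α ∘ₗ (TensorProduct.rid A X).symm.toLinearMap).rTensor M := by
  ext x m l
  simpa using LinearMap.congr_fun (nat (LinearMap.toSpanSingleton A M m) (x ⊗ₜ 1)) l

theorem range_le_range_dualTensorHom_of_natural
    {α : X ⊗[A] A →ₗ[A] (L →ₗ[A] A)} {β : X ⊗[A] M →ₗ[A] (L →ₗ[A] M)}
    (nat : ∀ (f : A →ₗ[A] M) (t : X ⊗[A] A), β (f.lTensor X t) = f ∘ₗ α t) :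
    LinearMap.range β ≤ LinearMap.range (dualTensorHom A L M) := by
  rw [eq_dualTensorHom_comp_rTensor_of_natural nat]
  exact LinearMap.range_comp_le_range _ _

theorem finite_projective_of_tensor_iso_hom_general
    (α : X ⊗[A] A ≃ₗ[A] (L →ₗ[A] A)) (β : X ⊗[A] L →ₗ[A] (L →ₗ[A] L))
    (one_mem_range : 1 ∈ LinearMap.range β)
    (nat : ∀ (f : A →ₗ[A] L) (t : X ⊗[A] A), β (f.lTensor X t) = f ∘ₗ α t) :
    Module.Finite A L ∧ Module.Projective A L ∧ Nonempty (X ≃ₗ[A] (L →ₗ[A] A)) := by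
  have one_mem : 1 ∈ LinearMap.range (dualTensorHom A L L) :=
    range_le_range_dualTensorHom_of_natural (α := α.toLinearMap) nat one_mem_range
  exact ⟨.of_one_mem_range_dualTensorHom one_mem, .of_one_mem_range_dualTensorHom one_mem,
    ⟨(TensorProduct.rid A X).symm ≪≫ₗ α⟩⟩

end

/-- If `X ⊗_A -` and `Hom_A(L, -)` are naturally isomorphic functors on `A`-modules,
then `L` is a finitely generated projective `A`-module and `X ≅ Hom_A(L, A)`. -/
theorem finite_projective_of_tensor_iso_hom
    {A : Type u} [CommRing A] {X L : Type u}
    [AddCommGroup X] [Module A X] [AddCommGroup L] [Module A L]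
    (e : ∀ (M : Type u) [AddCommGroup M] [Module A M], (X ⊗[A] M) ≃ₗ[A] (L →ₗ[A] M))
    (nat : ∀ (M : Type u) [AddCommGroup M] [Module A M]
      (N : Type u) [AddCommGroup N] [Module A N] (f : M →ₗ[A] N) (t : X ⊗[A] M),
      e N (LinearMap.lTensor X f t) = f ∘ₗ (e M t)) :
    Module.Finite A L ∧ Module.Projective A L ∧ Nonempty (X ≃ₗ[A] (L →ₗ[A] A)) :=
  finite_projective_of_tensor_iso_hom_general (e A) (e L).toLinearMap ((e L).surjective 1)
    (nat A L)
end

section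
/- Let C be an abelian category with arbitrary small coproducts in which coproducts are exact (C satisfies AB4). Then the localization functor from the homotopy category of unbounded cochain complexes K(C) to the unbounded derived category D(C) preserves arbitrary small coproducts. -/
open CategoryTheory Limits

universe w v u

/- The class of quasi-isomorphisms in `K(C)` admits a calculus of right fractions. If it is stable
under coproducts, then a family of fractions `X j ⟵ Y j ⟶ Z` assembles to a single fraction
`∐ X ⟵ ∐ Y ⟶ Z`, so that the localization functor preserves coproducts. The stability holds because
the homology functors on `K(C)` preserve coproducts: homology commutes with exact colimits, and the
quotient functor from complexes to `K(C)` preserves coproducts, since homotopies can be glued on the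
summands of a coproduct. -/

section Coproducts

variable {C D E : Type*} [Category C] [Category D] [Category E] {J : Type*}

lemma preservesCoproductsOfShape_of_essSurj [HasCoproductsOfShape J C] (L : C ⥤ D) [L.EssSurj]
    (hom_ext : ∀ {X : J → C} {Z : C} {f g : L.obj (∐ X) ⟶ L.obj Z},
      (∀ j, L.map (Sigma.ι X j) ≫ f = L.map (Sigma.ι X j) ≫ g) → f = g)
    (exists_desc : ∀ {X : J → C} {Z : C} (f : ∀ j, L.obj (X j) ⟶ L.obj Z),
      ∃ g : L.obj (∐ X) ⟶ L.obj Z, ∀ j, L.map (Sigma.ι X j) ≫ g = f j) :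
    PreservesColimitsOfShape (Discrete J) L := by
  suffices ∀ X : J → C, PreservesColimit (Discrete.functor X) L from
    preservesColimitsOfShape_of_discrete L
  intro X
  have exists_desc' (t : Cofan fun j ↦ L.obj (X j)) :
      ∃ g : L.obj (∐ X) ⟶ t.pt, ∀ j, L.map (Sigma.ι X j) ≫ g = t.inj j := by
    let e := L.objObjPreimageIso t.pt
    obtain ⟨g, hg⟩ := exists_desc fun j ↦ t.inj j ≫ e.inv
    exact ⟨g ≫ e.hom, fun j ↦ by simp [reassoc_of% (hg j)]⟩
  choose desc fac using exists_desc'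
  refine preservesColimit_of_preserves_colimit_cocone (coproductIsCoproduct X)
    ((isColimitMapCoconeCofanMkEquiv L X _).symm
      (Cofan.IsColimit.mk _ desc fac fun t m hm ↦ ?_))
  let e := L.objObjPreimageIso t.pt
  rw [← cancel_mono e.inv]
  refine hom_ext fun j ↦ ?_
  rw [reassoc_of% (fac t j), ← hm j]
  exact (Category.assoc _ _ _).symm

lemma exists_comp_iso_of_essSurj_of_discrete (L : C ⥤ D) [L.EssSurj] (F : Discrete J ⥤ D) :
    ∃ K : Discrete J ⥤ C, Nonempty (K ⋙ L ≅ F) :=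
  ⟨Discrete.functor fun j ↦ L.objPreimage (F.obj ⟨j⟩),
    ⟨Discrete.natIso fun j ↦ L.objObjPreimageIso (F.obj j)⟩⟩

lemma hasCoproductsOfShape_of_essSurj [HasCoproductsOfShape J C] (L : C ⥤ D) [L.EssSurj]
    [PreservesColimitsOfShape (Discrete J) L] : HasCoproductsOfShape J D where
  has_colimit F := by
    obtain ⟨K, ⟨e⟩⟩ := exists_comp_iso_of_essSurj_of_discrete L F
    exact hasColimit_of_iso e.symm

lemma preservesCoproductsOfShape_of_comp_essSurj [HasCoproductsOfShape J C] (L : C ⥤ D)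
    [L.EssSurj] [PreservesColimitsOfShape (Discrete J) L] (G : D ⥤ E)
    [PreservesColimitsOfShape (Discrete J) (L ⋙ G)] :
    PreservesColimitsOfShape (Discrete J) G where
  preservesColimit {F} := by
    obtain ⟨K, ⟨e⟩⟩ := exists_comp_iso_of_essSurj_of_discrete L F
    have : PreservesColimit (K ⋙ L) G :=
      preservesColimit_of_preserves_colimit_cocone
        (isColimitOfPreserves L (colimit.isColimit K))
        (isColimitOfPreserves (L ⋙ G) (colimit.isColimit K))
    exact preservesColimit_of_iso_diagram G e

end Coproducts

section Localization

variable {C D : Type*} [Category C] [Category D] {J : Type*}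

lemma isStableUnderColimitsOfShape_inverseImage {K : Type*} [Category K]
    (W : MorphismProperty D) [W.IsStableUnderColimitsOfShape K] (F : C ⥤ D)
    [PreservesColimitsOfShape K F] : (W.inverseImage F).IsStableUnderColimitsOfShape K where
  condition _ _ _ _ h₁ h₂ f hf φ hφ :=
    MorphismProperty.IsStableUnderColimitsOfShape.condition _ _ _ _
      (isColimitOfPreserves F h₁) (isColimitOfPreserves F h₂) (Functor.whiskerRight f F) hf
      (F.map φ) fun j ↦
        (F.map_comp _ _).symm.trans ((congrArg F.map (hφ j)).trans (F.map_comp _ _))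

variable [HasCoproductsOfShape J C]

lemma sigmaMap_mem_of_isStableUnderCoproductsOfShape (W : MorphismProperty C)
    [W.IsStableUnderCoproductsOfShape J] {X Y : J → C} (f : ∀ j, X j ⟶ Y j)
    (hf : ∀ j, W (f j)) : W (Limits.Sigma.map f) :=
  MorphismProperty.colimMap _ fun j ↦ hf j.as

lemma exists_map_sigmaι_comp_eq (L : C ⥤ D) (W : MorphismProperty C)
    [L.IsLocalization W] [W.HasRightCalculusOfFractions] [W.IsStableUnderCoproductsOfShape J]
    {X : J → C} {Z : C} (f : ∀ j, L.obj (X j) ⟶ L.obj Z) :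
    ∃ g : L.obj (∐ X) ⟶ L.obj Z, ∀ j, L.map (Sigma.ι X j) ≫ g = f j := by
  choose φ hφ using fun j ↦ Localization.exists_rightFraction L W (f j)
  let s := Limits.Sigma.map fun j ↦ (φ j).s
  have : IsIso (L.map s) := Localization.inverts L W s
    (sigmaMap_mem_of_isStableUnderCoproductsOfShape W _ fun j ↦ (φ j).hs)
  refine ⟨inv (L.map s) ≫ L.map (Sigma.desc fun j ↦ (φ j).f), fun j ↦ ?_⟩
  have : IsIso (L.map (φ j).s) := Localization.inverts L W _ (φ j).hs
  rw [← cancel_epi (L.map (φ j).s)]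
  calc
    L.map (φ j).s ≫ L.map (Sigma.ι X j) ≫ inv (L.map s) ≫ L.map (Sigma.desc fun j ↦ (φ j).f)
      = L.map (Sigma.ι _ j) ≫ L.map s ≫ inv (L.map s) ≫ L.map (Sigma.desc fun j ↦ (φ j).f) := by
        rw [← L.map_comp_assoc, ← L.map_comp_assoc (Sigma.ι _ j) s, Sigma.ι_map]
    _ = L.map (φ j).f := by
        rw [IsIso.hom_inv_id_assoc, ← L.map_comp, Sigma.ι_desc]
    _ = L.map (φ j).s ≫ f j := by
        rw [hφ j, MorphismProperty.RightFraction.map_s_comp_map]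

lemma map_eq_of_map_sigmaι_comp_eq (L : C ⥤ D) (W : MorphismProperty C)
    [L.IsLocalization W] [W.HasRightCalculusOfFractions] [W.IsStableUnderCoproductsOfShape J]
    {X : J → C} {Z : C} {f g : ∐ X ⟶ Z}
    (h : ∀ j, L.map (Sigma.ι X j) ≫ L.map f = L.map (Sigma.ι X j) ≫ L.map g) :
    L.map f = L.map g := by
  simp only [← L.map_comp, MorphismProperty.map_eq_iff_precomp L W] at h
  choose Y s hs fac using h
  exact (MorphismProperty.map_eq_iff_precomp L W f g).2
    ⟨∐ Y, Limits.Sigma.map s, sigmaMap_mem_of_isStableUnderCoproductsOfShape W s hs,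
      Sigma.hom_ext _ _ fun j ↦ by simp [fac j]⟩

lemma exists_map_sigmaMap_comp_eq_map (L : C ⥤ D) (W : MorphismProperty C)
    [L.IsLocalization W] [W.HasRightCalculusOfFractions] [W.IsStableUnderCoproductsOfShape J]
    {X : J → C} {Z : C} (f : L.obj (∐ X) ⟶ L.obj Z) :
    ∃ (Y : J → C) (s : ∀ j, Y j ⟶ X j) (a : ∐ Y ⟶ Z),
      W (Limits.Sigma.map s) ∧ L.map (Limits.Sigma.map s) ≫ f = L.map a := by
  obtain ⟨φ, rfl⟩ := Localization.exists_rightFraction L W f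
  choose ψ hψ using fun j ↦
    (MorphismProperty.LeftFraction.mk (Sigma.ι X j) φ.s φ.hs).exists_rightFraction
  have fac : Limits.Sigma.map (fun j ↦ (ψ j).s) = Sigma.desc (fun j ↦ (ψ j).f) ≫ φ.s :=
    Sigma.hom_ext _ _ fun j ↦ by simpa using hψ j
  refine ⟨_, fun j ↦ (ψ j).s, Sigma.desc (fun j ↦ (ψ j).f) ≫ φ.f,
    sigmaMap_mem_of_isStableUnderCoproductsOfShape W _ fun j ↦ (ψ j).hs, ?_⟩
  rw [fac, L.map_comp, L.map_comp, Category.assoc, MorphismProperty.RightFraction.map_s_comp_map]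

lemma eq_of_map_sigmaι_comp_eq (L : C ⥤ D) (W : MorphismProperty C)
    [L.IsLocalization W] [W.HasRightCalculusOfFractions] [W.IsStableUnderCoproductsOfShape J]
    {X : J → C} {Z : C} {f g : L.obj (∐ X) ⟶ L.obj Z}
    (h : ∀ j, L.map (Sigma.ι X j) ≫ f = L.map (Sigma.ι X j) ≫ g) : f = g := by
  obtain ⟨Y, s, a, hs, ha⟩ := exists_map_sigmaMap_comp_eq_map L W f
  obtain ⟨Y', s', b, hs', hb⟩ :=
    exists_map_sigmaMap_comp_eq_map L W (L.map (Limits.Sigma.map s) ≫ g)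
  have := Localization.inverts L W _ hs
  have := Localization.inverts L W _ hs'
  have ha' : L.map (Limits.Sigma.map s') ≫ L.map (Limits.Sigma.map s) ≫ f =
      L.map (Limits.Sigma.map s' ≫ a) := by rw [ha, L.map_comp]
  rw [← cancel_epi (L.map (Limits.Sigma.map s)), ← cancel_epi (L.map (Limits.Sigma.map s')),
    ha', hb]
  refine map_eq_of_map_sigmaι_comp_eq L W fun j ↦ ?_
  simp only [← ha', ← hb, ← L.map_comp_assoc, Sigma.ι_map, Sigma.ι_map_assoc]
  simp only [L.map_comp, Category.assoc, h]

theorem preservesCoproductsOfShape_of_isLocalization (L : C ⥤ D) (W : MorphismProperty C)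
    [L.IsLocalization W] [W.HasRightCalculusOfFractions] [W.IsStableUnderCoproductsOfShape J] :
    PreservesColimitsOfShape (Discrete J) L :=
  have := Localization.essSurj L W
  preservesCoproductsOfShape_of_essSurj L (eq_of_map_sigmaι_comp_eq L W)
    (exists_map_sigmaι_comp_eq L W)

end Localization

section Homotopy

variable {C : Type*} [Category C] [Preadditive C] {ι : Type*} {c : ComplexShape ι}
  {J : Type*} [HasCoproductsOfShape J C]

/-- The homotopy between morphisms from a coproduct of complexes glued from homotopies between
their restrictions to the summands. -/
noncomputable def homotopyOfIsColimitCofan {X : J → HomologicalComplex C c}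
    {P L : HomologicalComplex C c} {a : ∀ j, X j ⟶ P} (ha : IsColimit (Cofan.mk P a))
    {φ ψ : P ⟶ L} (h : ∀ j, Homotopy (a j ≫ φ) (a j ≫ ψ)) : Homotopy φ ψ := by
  have ha' (i : ι) := isColimitCofanMkObjOfIsColimit (HomologicalComplex.eval C c i) X a ha
  let H (i k : ι) : P.X i ⟶ L.X k := Cofan.IsColimit.desc (ha' i) fun j ↦ (h j).hom i k
  have fac (j : J) : (fun i k ↦ (a j).f i ≫ H i k) = (h j).hom :=
    funext₂ fun i _ ↦ Cofan.IsColimit.fac (ha' i) _ j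
  exact
    { hom := H
      zero := fun i k hik ↦ Cofan.IsColimit.hom_ext (ha' i) _ _ fun j ↦
        (congrFun₂ (fac j) i k).trans (((h j).zero i k hik).trans comp_zero.symm)
      comm := fun i ↦ Cofan.IsColimit.hom_ext (ha' i) _ _ fun j ↦ by
        have comm := (h j).comm i
        rw [← fac j, dNext_comp_left, prevD_comp_left, HomologicalComplex.comp_f,
          HomologicalComplex.comp_f, ← Preadditive.comp_add, ← Preadditive.comp_add] at comm
        exact comm }

instance preservesCoproductsOfShape_homotopyCategoryQuotient :
    PreservesColimitsOfShape (Discrete J) (HomotopyCategory.quotient C c) :=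
  preservesCoproductsOfShape_of_essSurj _
    (fun {X Z f g} h ↦ by
      obtain ⟨f, rfl⟩ := (HomotopyCategory.quotient C c).map_surjective f
      obtain ⟨g, rfl⟩ := (HomotopyCategory.quotient C c).map_surjective g
      exact HomotopyCategory.eq_of_homotopy _ _ (homotopyOfIsColimitCofan (coproductIsCoproduct X)
        fun j ↦ HomotopyCategory.homotopyOfEq _ _ (by simpa only [Functor.map_comp] using h j)))
    (fun {X Z} f ↦ by
      choose g hg using fun j ↦ (HomotopyCategory.quotient C c).map_surjective (f j)
      exact ⟨(HomotopyCategory.quotient C c).map (Sigma.desc g), fun j ↦ by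
        rw [← Functor.map_comp, Sigma.ι_desc, hg]⟩)

instance hasCoproductsOfShape_homotopyCategory : HasCoproductsOfShape J (HomotopyCategory C c) :=
  hasCoproductsOfShape_of_essSurj (HomotopyCategory.quotient C c)

end Homotopy

section ShortComplex

variable {C J : Type*} [Category C] [Category J]

/-- The natural transformation from the evaluation at `j` to the colimit functor. -/
noncomputable def evaluationToColim [HasColimitsOfShape J C] (j : J) :
    (evaluation J C).obj j ⟶ colim where
  app F := colimit.ι F j

section

variable [HasZeroMorphisms C] [HasColimitsOfShape J C]

/-- The degreewise colimit cocone of a diagram of short complexes, where the diagram is given as a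
short complex of functors. -/
noncomputable def shortComplexColimitCocone (T : ShortComplex (J ⥤ C)) :
    Cocone ((ShortComplex.functorEquivalence J C).functor.obj T) where
  pt := T.map colim
  ι :=
    { app j := T.mapNatTrans (evaluationToColim j)
      naturality i j f := by
        ext
        · exact (colimit.w T.X₁ f).trans (Category.comp_id _).symm
        · exact (colimit.w T.X₂ f).trans (Category.comp_id _).symm
        · exact (colimit.w T.X₃ f).trans (Category.comp_id _).symm }

lemma nonempty_isColimit_shortComplexColimitCocone (T : ShortComplex (J ⥤ C)) :
    Nonempty (IsColimit (shortComplexColimitCocone T)) :=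
  ⟨ShortComplex.isColimitOfIsColimitπ _ (colimit.isColimit T.X₁) (colimit.isColimit T.X₂)
    (colimit.isColimit T.X₃)⟩

end

variable [Abelian C]

/-- The homology of a short complex of functors is computed objectwise. -/
noncomputable def functorEquivalenceCompHomologyIso (T : ShortComplex (J ⥤ C)) :
    (ShortComplex.functorEquivalence J C).functor.obj T ⋙ ShortComplex.homologyFunctor C ≅
      T.homology :=
  NatIso.ofComponents (fun j ↦ T.mapHomologyIso ((evaluation J C).obj j)) fun {i j} f ↦ by
    have := NatTrans.app_homology ((evaluation J C).map f) T
    exact ((Iso.eq_inv_comp _).1 this).symm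

variable [HasColimitsOfShape J C] [HasExactColimitsOfShape J C]

lemma nonempty_isColimit_homologyFunctor_mapCocone_shortComplexColimitCocone
    (T : ShortComplex (J ⥤ C)) :
    Nonempty (IsColimit
      ((ShortComplex.homologyFunctor C).mapCocone (shortComplexColimitCocone T))) := by
  -- Exactness of `colim` identifies the homology of `T.map colim` with the colimit of `T.homology`.
  let e : colimit.cocone T.homology ≅
      (Cocone.precompose (functorEquivalenceCompHomologyIso T).inv).obj
        ((ShortComplex.homologyFunctor C).mapCocone (shortComplexColimitCocone T)) :=
    Cocone.ext (T.mapHomologyIso colim).symm fun j ↦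
      (Iso.comp_inv_eq _).2
        ((NatTrans.app_homology (evaluationToColim j) T).trans (Category.assoc _ _ _).symm)
  exact ⟨IsColimit.precomposeInvEquiv _ _ ((colimit.isColimit T.homology).ofIsoColimit e)⟩

instance preservesColimitsOfShape_shortComplexHomologyFunctor :
    PreservesColimitsOfShape J (ShortComplex.homologyFunctor C) where
  preservesColimit {F} := by
    let T := (ShortComplex.functorEquivalence J C).inverse.obj F
    let e : (ShortComplex.functorEquivalence J C).functor.obj T ≅ F :=
      (ShortComplex.functorEquivalence J C).counitIso.app F
    have : PreservesColimit ((ShortComplex.functorEquivalence J C).functor.obj T)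
        (ShortComplex.homologyFunctor C) :=
      preservesColimit_of_preserves_colimit_cocone
        (nonempty_isColimit_shortComplexColimitCocone T).some
        (nonempty_isColimit_homologyFunctor_mapCocone_shortComplexColimitCocone T).some
    exact preservesColimit_of_iso_diagram _ e

end ShortComplex

section Homology

variable {C : Type*} [Category C] {ι : Type*} (c : ComplexShape ι) (i : ι)

instance preservesColimitsOfShape_shortComplexFunctor [HasZeroMorphisms C] {J : Type*}
    [Category J] [HasColimitsOfShape J C] :
    PreservesColimitsOfShape J (HomologicalComplex.shortComplexFunctor C c i) where
  preservesColimit := ⟨fun ha ↦ ⟨ShortComplex.isColimitOfIsColimitπ _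
    (isColimitOfPreserves (HomologicalComplex.eval C c _) ha)
    (isColimitOfPreserves (HomologicalComplex.eval C c _) ha)
    (isColimitOfPreserves (HomologicalComplex.eval C c _) ha)⟩⟩

variable [Abelian C]

instance preservesColimitsOfShape_homologicalComplexHomologyFunctor {J : Type*} [Category J]
    [HasColimitsOfShape J C] [HasExactColimitsOfShape J C] :
    PreservesColimitsOfShape J (HomologicalComplex.homologyFunctor C c i) :=
  preservesColimitsOfShape_of_natIso (HomologicalComplex.homologyFunctorIso C c i).symm

variable {J : Type*} [HasCoproductsOfShape J C] [HasExactColimitsOfShape (Discrete J) C]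

instance preservesCoproductsOfShape_homotopyCategoryHomologyFunctor :
    PreservesColimitsOfShape (Discrete J) (HomotopyCategory.homologyFunctor C c i) :=
  have : PreservesColimitsOfShape (Discrete J)
      (HomotopyCategory.quotient C c ⋙ HomotopyCategory.homologyFunctor C c i) :=
    preservesColimitsOfShape_of_natIso (HomotopyCategory.homologyFunctorFactors C c i).symm
  preservesCoproductsOfShape_of_comp_essSurj (HomotopyCategory.quotient C c) _

instance isStableUnderCoproductsOfShape_homotopyCategoryQuasiIso :
    (HomotopyCategory.quasiIso C c).IsStableUnderCoproductsOfShape J where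
  condition X Y a b ha hb f hf φ hφ i :=
    (isStableUnderColimitsOfShape_inverseImage (MorphismProperty.isomorphisms C)
      (HomotopyCategory.homologyFunctor C c i)).condition X Y a b ha hb f (fun j ↦ hf j i) φ hφ

end Homology

theorem DerivedCategory.Qh_preservesCoproducts_of_AB4_general
    {C : Type*} [Category C] [Abelian C] [HasDerivedCategory.{w} C] (J : Type*)
    [HasCoproductsOfShape J C] [HasExactColimitsOfShape (Discrete J) C] :
    PreservesColimitsOfShape (Discrete J) (DerivedCategory.Qh (C := C)) :=
  preservesCoproductsOfShape_of_isLocalization DerivedCategory.Qh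
    (HomotopyCategory.quasiIso C (ComplexShape.up ℤ))

/-- If `C` is an abelian category with exact small coproducts (AB4), then the
localization functor from the homotopy category of unbounded cochain complexes to the
unbounded derived category preserves arbitrary small coproducts. -/
theorem DerivedCategory.Qh_preservesCoproducts_of_AB4
    {C : Type u} [Category.{v} C] [Abelian C] [HasCoproducts.{v} C] [AB4 C]
    [HasDerivedCategory.{w} C] (J : Type v) :
    PreservesColimitsOfShape (Discrete J) (DerivedCategory.Qh (C := C)) :=
  DerivedCategory.Qh_preservesCoproducts_of_AB4_general J
end
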